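/- arXiv:1508.05840 — 3 statements merged into one kernel-verified Lean document; each statement's English description precedes it below -/
import Mathlib

section
/- Let F be a field of characteristic 0, ι a type with at least two elements and a distinguished element i₀, and let V be the set of finitely supported functions ι → F. Let y = {s ∈ V : s(i₀) + 1 = Σ_{i ≠ i₀} s(i)} (a finite sum since s is finitely supported). Let B be the smallest collection of subsets of V that contains y, the singleton {s} for every s ∈ y, and every relativized diagonal D_{ij} ∩ V (i, j ∈ ι), and that is closed under binary intersection, complementation relative to V, and every cylindrification C_i (i ∈ ι) (note C_i X ⊆ V whenever X ⊆ V, since changing one coordinate preserves finite support). Then {t} ∈ B for every t ∈ V; consequently B is atomic with atoms exactly the singletons {t}, t ∈ V, and if moreover |ι| ≤ |F| then |B| = |F|. -/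
universe u

/-- The cylindrification `C_i X = {s ∈ ^ιU : ∃ t ∈ X, t j = s j for all j ≠ i}`. -/
def Cyl {U ι : Type*} (i : ι) (X : Set (ι → U)) : Set (ι → U) :=
  {s | ∃ t ∈ X, ∀ j, j ≠ i → t j = s j}

/-- The diagonal `D_{ij} = {s ∈ ^ιU : s i = s j}`. -/
def Diag (U ι : Type*) (i j : ι) : Set (ι → U) :=
  {s | s i = s j}

/-- The unit `V` of the weak set algebra: all finitely supported functions `ι → F`. -/
def weakUnit (F ι : Type*) [Zero F] : Set (ι → F) :=
  {s | (Function.support s).Finite}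

/-- The distinguished generator `y = {s ∈ V : s i₀ + 1 = ∑_{i ≠ i₀} s i}`. -/
def yset (F ι : Type*) [Field F] (i₀ : ι) : Set (ι → F) :=
  {s | s ∈ weakUnit F ι ∧ s i₀ + 1 = ∑ᶠ i ∈ {i : ι | i ≠ i₀}, s i}

/-- `Gen F ι i₀ X` says that `X` belongs to the smallest collection of subsets of the unit `V`
containing `y`, the singleton `{s}` for every `s ∈ y`, and every relativized diagonal
`D_{ij} ∩ V`, and closed under binary intersections, complements relative to `V`, and all
cylindrifications. -/
inductive Gen (F ι : Type*) [Field F] (i₀ : ι) : Set (ι → F) → Prop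
  | y : Gen F ι i₀ (yset F ι i₀)
  | sing (s : ι → F) (hs : s ∈ yset F ι i₀) : Gen F ι i₀ {s}
  | diag (i j : ι) : Gen F ι i₀ (Diag F ι i j ∩ weakUnit F ι)
  | inter {X Y : Set (ι → F)} : Gen F ι i₀ X → Gen F ι i₀ Y → Gen F ι i₀ (X ∩ Y)
  | compl {X : Set (ι → F)} : Gen F ι i₀ X → Gen F ι i₀ (weakUnit F ι \ X)
  | cyl (i : ι) {X : Set (ι → F)} : Gen F ι i₀ X → Gen F ι i₀ (Cyl i X)

theorem upd_mem {F ι : Type*} [Field F] [DecidableEq ι] {t : ι → F} (ht : t ∈ weakUnit F ι)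
    (i : ι) (c : F) : Function.update t i c ∈ weakUnit F ι := by
  refine Set.Finite.subset (Set.Finite.insert i ht) ?_
  intro j hj
  by_cases h : j = i
  · exact Or.inl h
  · right
    simpa [Function.mem_support, Function.update_of_ne h] using hj

theorem cyl_sing {F ι : Type*} [DecidableEq ι] (t : ι → F) (i : ι) (c : F) :
    Cyl i {Function.update t i c} = {s | ∀ j, j ≠ i → t j = s j} := by
  ext s
  constructor
  · rintro ⟨u, rfl, hu⟩ j hj
    have := hu j hj
    rwa [Function.update_of_ne hj] at this
  · intro h
    refine ⟨_, rfl, fun j hj => ?_⟩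
    rw [Function.update_of_ne hj]
    exact h j hj

theorem gen_line {F ι : Type*} [Field F] [Nontrivial ι] (i₀ : ι) {t : ι → F}
    (ht : t ∈ weakUnit F ι) (i : ι) : Gen F ι i₀ {s | ∀ j, j ≠ i → t j = s j} := by
  classical
  obtain ⟨c, hc⟩ : ∃ c, Function.update t i c ∈ yset F ι i₀ := by
    by_cases h : i = i₀
    · subst h
      refine ⟨(∑ᶠ j ∈ {j : ι | j ≠ i}, t j) - 1, upd_mem ht _ _, ?_⟩
      rw [Function.update_self, sub_add_cancel]
      refine finsum_mem_congr rfl fun j hj => ?_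
      rw [Function.update_of_ne hj]
    · refine ⟨t i₀ + 1 - ∑ᶠ j ∈ {j : ι | j ≠ i₀ ∧ j ≠ i}, t j, upd_mem ht _ _, ?_⟩
      have hs : {j : ι | j ≠ i₀} = insert i {j : ι | j ≠ i₀ ∧ j ≠ i} := by
        ext j
        by_cases hj : j = i
        · subst hj; simp [h]
        · simp [hj]
      rw [hs, finsum_mem_insert' _ (by simp) ((upd_mem ht _ _).subset Set.inter_subset_right),
        Function.update_self, Function.update_of_ne (Ne.symm h)]
      have : ∀ c, ∑ᶠ j ∈ {j : ι | j ≠ i₀ ∧ j ≠ i}, Function.update t i c j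
          = ∑ᶠ j ∈ {j : ι | j ≠ i₀ ∧ j ≠ i}, t j := fun c =>
        finsum_mem_congr rfl fun j hj => Function.update_of_ne hj.2 _ _
      rw [this, sub_add_cancel]
  rw [← cyl_sing t i c]
  exact Gen.cyl i (Gen.sing _ hc)

theorem gen_sing {F ι : Type*} [Field F] [Nontrivial ι] (i₀ : ι) {t : ι → F}
    (ht : t ∈ weakUnit F ι) : Gen F ι i₀ {t} := by
  obtain ⟨k, hk⟩ := exists_ne i₀
  have := Gen.inter (gen_line i₀ ht i₀) (gen_line i₀ ht k)
  convert this using 1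
  ext s
  constructor
  · rintro rfl
    exact ⟨fun _ _ => rfl, fun _ _ => rfl⟩
  · rintro ⟨h1, h2⟩
    refine funext fun j => ?_
    by_cases hj : j = i₀
    · exact (h2 j (by rw [hj]; exact hk.symm)).symm
    · exact (h1 j hj).symm

theorem gen_subset {F ι : Type*} [Field F] {i₀ : ι} {X : Set (ι → F)} (h : Gen F ι i₀ X) :
    X ⊆ weakUnit F ι := by
  classical
  induction h with
  | y => exact fun s hs => hs.1
  | sing s hs => rintro _ rfl; exact hs.1
  | diag i j => exact Set.inter_subset_right
  | inter _ _ h1 _ => exact Set.inter_subset_left.trans h1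
  | compl _ _ => exact Set.sdiff_subset
  | cyl i _ h =>
    rintro s ⟨t, ht, hs⟩
    have : s = Function.update t i (s i) := by
      funext j
      by_cases hj : j = i
      · subst hj; simp
      · rw [Function.update_of_ne hj, hs j hj]
    rw [this]
    exact upd_mem (h ht) _ _

/-- Shapes of the term nodes. -/
abbrev Shp (F ι : Type u) [Zero F] : Type u :=
  ((ι →₀ F) ⊕ (ι × ι)) ⊕ (ι ⊕ (PUnit.{u+1} ⊕ (PUnit.{u+1} ⊕ PUnit.{u+1})))

/-- Arities. -/
def Ary (F ι : Type u) [Zero F] : Shp F ι → Type u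
  | .inl _ => PEmpty
  | .inr (.inl _) => PUnit
  | .inr (.inr (.inl _)) => PEmpty
  | .inr (.inr (.inr (.inl _))) => PUnit
  | .inr (.inr (.inr (.inr _))) => ULift Bool

/-- Evaluation of terms. -/
def evl (F ι : Type u) [Field F] (i₀ : ι) : WType (Ary F ι) → Set (ι → F)
  | ⟨.inl (.inl s), _⟩ => {⇑s}
  | ⟨.inl (.inr p), _⟩ => Diag F ι p.1 p.2 ∩ weakUnit F ι
  | ⟨.inr (.inl i), f⟩ => Cyl i (evl F ι i₀ (f PUnit.unit))
  | ⟨.inr (.inr (.inl _)), _⟩ => yset F ι i₀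
  | ⟨.inr (.inr (.inr (.inl _))), f⟩ => weakUnit F ι \ evl F ι i₀ (f PUnit.unit)
  | ⟨.inr (.inr (.inr (.inr _))), f⟩ =>
    evl F ι i₀ (f (ULift.up true)) ∩ evl F ι i₀ (f (ULift.up false))

theorem evl_surj (F ι : Type u) [Field F] (i₀ : ι) {X : Set (ι → F)} (h : Gen F ι i₀ X) :
    ∃ w, evl F ι i₀ w = X := by
  induction h with
  | y => exact ⟨⟨.inr (.inr (.inl PUnit.unit)), PEmpty.elim⟩, by simp only [evl]⟩
  | sing s hs =>
    exact ⟨⟨.inl (.inl (Finsupp.ofSupportFinite s hs.1)), PEmpty.elim⟩, by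
      simp only [evl]; rfl⟩
  | diag i j => exact ⟨⟨.inl (.inr (i, j)), PEmpty.elim⟩, by simp only [evl]⟩
  | inter _ _ h1 h2 =>
    obtain ⟨w, rfl⟩ := h1
    obtain ⟨v, rfl⟩ := h2
    exact ⟨⟨.inr (.inr (.inr (.inr PUnit.unit))),
      fun b : ULift Bool => if b.down then w else v⟩, by simp [evl]⟩
  | compl _ h =>
    obtain ⟨w, rfl⟩ := h
    exact ⟨⟨.inr (.inr (.inr (.inl PUnit.unit))), fun _ => w⟩, by simp only [evl]⟩
  | cyl i _ h =>
    obtain ⟨w, rfl⟩ := h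
    exact ⟨⟨.inr (.inl i), fun _ => w⟩, by simp only [evl]⟩

theorem mk_shp (F ι : Type u) [Field F] [CharZero F] [Nonempty ι]
    (h : Cardinal.mk ι ≤ Cardinal.mk F) : Cardinal.mk (Shp F ι) ≤ Cardinal.mk F := by
  have : Infinite F := Infinite.of_injective _ (Nat.cast_injective (R := F))
  have hF : Cardinal.aleph0 ≤ Cardinal.mk F := Cardinal.aleph0_le_mk F
  have h1 : (1 : Cardinal.{u}) ≤ Cardinal.mk F := Cardinal.one_le_aleph0.trans hF
  have add : ∀ {a b : Cardinal.{u}}, a ≤ Cardinal.mk F → b ≤ Cardinal.mk F →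
      a + b ≤ Cardinal.mk F := fun ha hb => Cardinal.add_le_of_le hF ha hb
  simp only [Shp, Cardinal.mk_sum, Cardinal.lift_id, Cardinal.mk_prod, Cardinal.mk_punit]
  refine add (add ?_ ?_) (add h (add h1 (add h1 h1)))
  · rw [Cardinal.mk_finsupp_of_infinite']
    exact max_le h le_rfl
  · exact (mul_le_mul' h h).trans (Cardinal.mul_eq_self hF).le

theorem gen_card (F ι : Type u) [Field F] [CharZero F] [Nontrivial ι] (i₀ : ι)
    (h : Cardinal.mk ι ≤ Cardinal.mk F) :
    Cardinal.mk {X : Set (ι → F) // Gen F ι i₀ X} = Cardinal.mk F := by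
  classical
  have : Infinite F := Infinite.of_injective _ (Nat.cast_injective (R := F))
  have hF : Cardinal.aleph0 ≤ Cardinal.mk F := Cardinal.aleph0_le_mk F
  apply le_antisymm
  · have hfin : ∀ a, Finite (Ary F ι a) := by
      rintro (_ | _ | _ | _ | _) <;> simp only [Ary] <;> infer_instance
    have hW : Cardinal.mk (WType (Ary F ι)) ≤ Cardinal.mk F :=
      (WType.cardinalMk_le_max_aleph0_of_finite' (β := Ary F ι)).trans
        (max_le ((Cardinal.lift_id _).le.trans (mk_shp F ι h)) hF)
    refine le_trans ?_ hW
    choose g hg using fun X : {X : Set (ι → F) // Gen F ι i₀ X} => evl_surj F ι i₀ X.2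
    refine Cardinal.mk_le_of_injective (f := g) fun X Y hXY => Subtype.ext ?_
    rw [← hg X, ← hg Y, hXY]
  · refine Cardinal.mk_le_of_injective
      (f := fun a : F => (⟨{Function.update (0 : ι → F) i₀ a},
        gen_sing i₀ (upd_mem (by simp [weakUnit]) _ _)⟩ :
        {X : Set (ι → F) // Gen F ι i₀ X})) fun a b hab => ?_
    have := Set.singleton_injective (congrArg Subtype.val hab)
    simpa using congrFun this i₀

/-- Over a field `F` of characteristic `0` and an index type `ι` with at least two elements,
the generated weak set algebra `B` contains every singleton `{t}`, `t ∈ V`; consequently `B`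
is atomic with atoms exactly the singletons of elements of `V`, and if `|ι| ≤ |F|` then
`|B| = |F|`. -/
theorem weak_set_algebra_singletons_atomic_card (F : Type u) [Field F] [CharZero F]
    (ι : Type u) [Nontrivial ι] (i₀ : ι) :
    (∀ t ∈ weakUnit F ι, Gen F ι i₀ {t}) ∧
    (∀ X : Set (ι → F), Gen F ι i₀ X → X.Nonempty →
      ∃ A : Set (ι → F), (Gen F ι i₀ A ∧ A.Nonempty ∧
        ∀ Y : Set (ι → F), Gen F ι i₀ Y → Y ⊆ A → Y = ∅ ∨ Y = A) ∧ A ⊆ X) ∧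
    (∀ X : Set (ι → F),
      (Gen F ι i₀ X ∧ X.Nonempty ∧
        ∀ Y : Set (ι → F), Gen F ι i₀ Y → Y ⊆ X → Y = ∅ ∨ Y = X) ↔
      ∃ t ∈ weakUnit F ι, X = {t}) ∧
    (Cardinal.mk ι ≤ Cardinal.mk F →
      Cardinal.mk {X : Set (ι → F) // Gen F ι i₀ X} = Cardinal.mk F) := by
  have hat : ∀ t ∈ weakUnit F ι, Gen F ι i₀ {t} ∧ ({t} : Set (ι → F)).Nonempty ∧
      ∀ Y : Set (ι → F), Gen F ι i₀ Y → Y ⊆ {t} → Y = ∅ ∨ Y = {t} := fun t ht =>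
    ⟨gen_sing i₀ ht, Set.singleton_nonempty t, fun Y _ hY => Set.subset_singleton_iff_eq.1 hY⟩
  refine ⟨fun t ht => gen_sing i₀ ht, ?_, ?_, gen_card F ι i₀⟩
  · rintro X hX ⟨t, ht⟩
    exact ⟨{t}, hat t (gen_subset hX ht), Set.singleton_subset_iff.2 ht⟩
  · intro X
    constructor
    · rintro ⟨hX, ⟨t, ht⟩, hmin⟩
      have htV := gen_subset hX ht
      refine ⟨t, htV, ?_⟩
      rcases hmin {t} (gen_sing i₀ htV) (Set.singleton_subset_iff.2 ht) with h | h
      · exact absurd h (Set.singleton_ne_empty t)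
      · exact h.symm
    · rintro ⟨t, ht, rfl⟩
      exact hat t ht
end

section
/- For all natural numbers k and g there exists a finite simple graph G whose chromatic number is greater than k and whose girth is greater than g. -/
open Finset

lemma count_cyl {E : Type} [Fintype E] [DecidableEq E] (m : ℕ) (T : Finset E) (A : Finset (Fin m)) :
    (univ.filter (fun f : E → Fin m => ∀ e ∈ T, f e ∈ A)).card * m ^ T.card
      = A.card ^ T.card * m ^ Fintype.card E := by
  have h : (univ.filter (fun f : E → Fin m => ∀ e ∈ T, f e ∈ A))
      = Fintype.piFinset (fun e => if e ∈ T then A else univ) := by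
    ext f
    simp only [mem_filter, mem_univ, true_and, Fintype.mem_piFinset]
    refine forall_congr' fun e => ?_
    split_ifs with h <;> simp [h]
  rw [h, Fintype.card_piFinset]
  have h2 : ∀ e, (if e ∈ T then A else univ).card = if e ∈ T then A.card else m := by
    intro e; split_ifs <;> simp
  simp_rw [h2]
  rw [prod_ite, prod_const, prod_const]
  have h3 : (univ.filter (fun e => e ∈ T)) = T := by ext; simp
  have h4 : (univ.filter (fun e => e ∉ T)) = Tᶜ := by ext; simp
  rw [h3, h4, mul_assoc, ← pow_add, card_compl, Nat.sub_add_cancel (card_le_univ T)]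

lemma bern (M p : ℕ) : M ^ (p+1) + (p+1) * M ^ p ≤ (M+1) ^ (p+1) := by
  induction p with
  | zero => simp
  | succ p ih =>
    calc _ ≤ (M ^ (p+1) + (p+1) * M ^ p) * (M+1) := by
          have : 0 ≤ (p+1) * M^p := Nat.zero_le _
          simp only [pow_succ] at *
          nlinarith
      _ ≤ (M+1)^(p+1) * (M+1) := Nat.mul_le_mul_right _ ih
      _ = _ := (pow_succ _ _).symm

lemma two_mul_pow_le (M : ℕ) : 2 * M ^ (M+1) ≤ (M+1) ^ (M+1) := by
  have := bern M M
  have h2 : (M+1) * M^M = M^(M+1) + M^M := by ring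
  omega

lemma edges_getElem_eq {V : Type} (G : SimpleGraph V) {a b : V} (w : G.Walk a b) (j : ℕ)
    (h : j < w.edges.length) : w.edges[j] = s(w.getVert j, w.getVert (j+1)) := by
  induction w generalizing j with
  | nil => simp at h
  | cons hadj p ih =>
    cases j with
    | zero => simp
    | succ j => 
      simp only [SimpleGraph.Walk.edges_cons, List.getElem_cons_succ, SimpleGraph.Walk.getVert_cons_succ]
      exact ih _ _

/-- edges of a cyclic tuple -/
def cycEdge {V : Type} {i : ℕ} (v : Fin (i+1) → V) (j : Fin (i+1)) : Sym2 V := s(v j, v (j+1))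

lemma cycle_tuple {V : Type} (G : SimpleGraph V) {a : V} (w : G.Walk a a) (hw : w.IsCycle)
    (i : ℕ) (hi : w.length = i + 1) :
    ∃ v : Fin (i+1) → V, v 0 = a ∧ Function.Injective (cycEdge v) ∧ ∀ j, cycEdge v j ∈ G.edgeSet := by
  have hv : ∀ j : Fin (i+1), w.getVert ((j+1 : Fin (i+1)) : ℕ) = w.getVert ((j:ℕ)+1) := by
    intro j
    rw [Fin.val_add_one]
    split_ifs with h
    · subst h
      simp [← hi]
    · rfl
  have he : ∀ j : Fin (i+1), cycEdge (fun j : Fin (i+1) => w.getVert j) j = w.edges[(j:ℕ)]'(by have := j.2; simp [hi]; omega) := by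
    intro j
    simp only [cycEdge]
    rw [hv, edges_getElem_eq]
  refine ⟨fun j => w.getVert j, by simp, ?_, ?_⟩
  · intro x y hxy
    rw [he, he] at hxy
    exact Fin.ext ((List.Nodup.getElem_inj_iff hw.edges_nodup).1 hxy)
  · intro j
    rw [he]
    exact w.edges_subset_edgeSet (List.getElem_mem _)

open Classical in
lemma main_exists (K g : ℕ) (hK : 1 ≤ K) :
    ∃ (n s : ℕ) (G : SimpleGraph (Fin n)) (D : Finset (Fin n)), 
      D.card < K * s ∧ 2 * K * s = n ∧ 
      (∀ S : Finset (Fin n), S.card = s → ∃ a ∈ S, ∃ b ∈ S, G.Adj a b) ∧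
      (∀ a, ∀ w : G.Walk a a, w.IsCycle → w.length ≤ g → a ∈ D) := by
  obtain ⟨t, ht⟩ : ∃ t, t = 4 * K + 2 := ⟨_, rfl⟩
  obtain ⟨d, hd⟩ : ∃ d, d = 2 * K * t := ⟨_, rfl⟩
  obtain ⟨C, hC⟩ : ∃ C, C = g * d ^ g := ⟨_, rfl⟩
  obtain ⟨M, hM⟩ : ∃ M, M = 2 * C + 1 := ⟨_, rfl⟩
  obtain ⟨m, hm⟩ : ∃ m, m = M + 1 := ⟨_, rfl⟩
  obtain ⟨s, hs⟩ : ∃ s, s = m * t := ⟨_, rfl⟩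
  obtain ⟨n, hn⟩ : ∃ n, n = 2 * K * s := ⟨_, rfl⟩
  have hnd : n = d * m := by rw [hn, hd, hs]; ring
  have hd1 : 1 ≤ d := by rw [hd, ht]; nlinarith
  have : NeZero m := ⟨by omega⟩
  have hm0 : 0 < m := by omega
  let E := Sym2 (Fin n)
  let F := E → Fin m
  let X := Σ i : Fin g, (Fin (i+1) → Fin n)
  let P : F → X → Prop := fun f x => Function.Injective (cycEdge x.2) ∧ ∀ j, f (cycEdge x.2 j) = 0
  let N := m ^ Fintype.card E
  have hN : 0 < N := Nat.pow_pos hm0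
  have hF : Fintype.card F = N := by simp [F, N]
  -- expected number of short cycles
  have h1 : ∀ x : X, (univ.filter (fun f : F => P f x)).card * m ^ (x.1.val+1) ≤ N := by
    intro x
    by_cases hx : Function.Injective (cycEdge x.2)
    · have := count_cyl m (univ.image (cycEdge x.2)) {0}
      rw [card_image_of_injective _ hx] at this
      simp only [mem_image, mem_univ, true_and, forall_exists_index, forall_apply_eq_imp_iff, mem_singleton, card_univ, Fintype.card_fin, card_singleton, one_pow, one_mul] at this
      simp only [P, hx, true_and]
      exact this.le
    · simp [P, hx]
  have h2 : ∑ f : F, (univ.filter (fun x : X => P f x)).card ≤ C * N := by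
    have := sum_card_bipartiteAbove_eq_sum_card_bipartiteBelow (s := (univ : Finset F)) (t := (univ : Finset X)) P
    simp only [bipartiteAbove, bipartiteBelow] at this
    rw [this, Fintype.sum_sigma]
    calc _ ≤ ∑ i : Fin g, d ^ g * N := by
          refine sum_le_sum fun i _ => ?_
          refine Nat.le_of_mul_le_mul_right ?_ (show 0 < m ^ (i.val+1) from Nat.pow_pos hm0)
          rw [sum_mul]
          calc _ ≤ ∑ _v : Fin (i.val+1) → Fin n, N := sum_le_sum fun v _ => h1 ⟨i, v⟩
            _ = d ^ (i.val+1) * N * m ^ (i.val+1) := by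
              simp [hnd, mul_pow]; ring
            _ ≤ _ := by
              gcongr
              omega
      _ = C * N := by simp [hC, mul_assoc]
  let B1 : Finset F := univ.filter (fun f => K * s ≤ (univ.filter (fun x : X => P f x)).card)
  have hB1 : 2 * B1.card < N := by
    have a1 : B1.card * (K * s) ≤ C * N := by
      calc _ = ∑ f ∈ B1, K * s := by simp
        _ ≤ ∑ f ∈ B1, (univ.filter (fun x : X => P f x)).card := sum_le_sum fun f hf => (mem_filter.1 hf).2
        _ ≤ _ := sum_le_sum_of_subset (subset_univ _)
        _ ≤ _ := h2
    have a2 : 2 * C + 1 ≤ K * s := by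
      have : m ≤ s := by rw [hs, ht]; nlinarith
      nlinarith
    by_contra hcon
    push Not at hcon
    have a3 : B1.card * (2 * C + 1) ≤ C * N := le_trans (Nat.mul_le_mul_left _ a2) a1
    nlinarith
  -- independent sets
  let T : Finset (Fin n) → Finset E := fun S => S.offDiag.image Sym2.mk.uncurry
  let Q : F → Finset (Fin n) → Prop := fun f S => ∀ e ∈ T S, f e ∈ ({0}ᶜ : Finset (Fin m))
  have h3 : ∀ S : Finset (Fin n), S.card = s → 
      (univ.filter (fun f : F => Q f S)).card * 2 ^ (n+1) ≤ N := by
    intro S hS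
    have b1 := count_cyl m (T S) {0}ᶜ
    have b2 : (T S).card = s.choose 2 := by rw [← hS]; exact Sym2.card_image_offDiag S
    have b3 : m * (n+1) ≤ s.choose 2 := by
      rw [Nat.choose_two_right, Nat.le_div_iff_mul_le (by norm_num)]
      obtain ⟨r, hr⟩ : ∃ r, s = r + 1 := ⟨s - 1, by
        have : 0 < s := by rw [hs]; apply Nat.mul_pos <;> omega
        omega⟩
      rw [hr, Nat.add_sub_cancel, ← hr]
      have c1 : 2 * (n + 1) ≤ t * r := by
        have : t * s = t * r + t := by rw [hr]; ring
        have c2 : t * s = 4 * K * s + 2 * s := by rw [ht]; ring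
        have c3 : 2 * t ≤ s := by rw [hs]; apply Nat.mul_le_mul_right; omega
        have c4 : 2 * n = 4 * K * s := by rw [hn]; ring
        omega
      calc m * (n+1) * 2 = m * (2 * (n+1)) := by ring
        _ ≤ m * (t * r) := Nat.mul_le_mul_left _ c1
        _ = s * r := by rw [hs]; ring
    have b4 : ({0}ᶜ : Finset (Fin m)).card = M := by simp [card_compl, hm]
    rw [b4] at b1
    have b5 : 2 ^ (n+1) * M ^ (T S).card ≤ m ^ (T S).card := by
      obtain ⟨u, hu⟩ := Nat.exists_eq_add_of_le b3
      rw [b2, hu, pow_add M, pow_add m, pow_mul M, pow_mul m, ← mul_assoc, ← mul_pow]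
      have := two_mul_pow_le M
      rw [← hm] at this
      gcongr
      omega
    refine Nat.le_of_mul_le_mul_right ?_ (show 0 < m ^ (T S).card from Nat.pow_pos hm0)
    calc _ = ((univ.filter (fun f : F => Q f S)).card * m ^ (T S).card) * 2 ^ (n+1) := by ring
      _ = (M ^ (T S).card * N) * 2 ^ (n+1) := by rw [b1]
      _ = (2 ^ (n+1) * M ^ (T S).card) * N := by ring
      _ ≤ m ^ (T S).card * N := Nat.mul_le_mul_right _ b5
      _ = _ := by ring
  let B2 : Finset F := (univ.filter (fun S : Finset (Fin n) => S.card = s)).biUnion fun S => univ.filter (fun f : F => Q f S)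
  have hB2 : 2 * B2.card ≤ N := by
    have : B2.card * 2 ^ (n+1) ≤ 2 ^ n * N := by
      calc _ ≤ (∑ S ∈ univ.filter (fun S : Finset (Fin n) => S.card = s), (univ.filter (fun f : F => Q f S)).card) * 2 ^ (n+1) := Nat.mul_le_mul_right _ card_biUnion_le
        _ ≤ ∑ S ∈ univ.filter (fun S : Finset (Fin n) => S.card = s), N := by
          rw [sum_mul]
          exact sum_le_sum fun S hS => h3 S (mem_filter.1 hS).2
        _ ≤ ∑ S : Finset (Fin n), N := sum_le_sum_of_subset (subset_univ _)
        _ = _ := by simp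
    refine Nat.le_of_mul_le_mul_right ?_ (show 0 < 2 ^ n by positivity)
    calc _ = B2.card * 2 ^ (n+1) := by ring
      _ ≤ _ := this
      _ = _ := by ring
  obtain ⟨f, hf⟩ : ∃ f : F, f ∉ B1 ∪ B2 := by
    by_contra hcon
    push Not at hcon
    have := card_union_le B1 B2
    rw [eq_univ_iff_forall.2 hcon, card_univ, hF] at this
    omega
  rw [mem_union, not_or] at hf
  obtain ⟨hf1, hf2⟩ := hf
  let G : SimpleGraph (Fin n) := SimpleGraph.fromEdgeSet {e | f e = 0}
  refine ⟨n, s, G, (univ.filter (fun x : X => P f x)).image (fun x => x.2 0), ?_, hn.symm, ?_, ?_⟩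
  · refine lt_of_le_of_lt card_image_le ?_
    simpa [B1] using hf1
  · intro S hS
    by_contra hcon
    push Not at hcon
    apply hf2
    simp only [B2, mem_biUnion, mem_filter, mem_univ, true_and]
    refine ⟨S, hS, ?_⟩
    intro e he
    simp only [T, mem_image, mem_offDiag] at he
    obtain ⟨⟨a, b⟩, ⟨ha, hb, hab⟩, rfl⟩ := he
    have := hcon a ha b hb
    simp only [G, SimpleGraph.fromEdgeSet_adj, not_and] at this
    simp only [mem_compl, mem_singleton]
    intro h0
    exact this h0 hab
  · intro a w hw hl
    have h3 := hw.three_le_length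
    obtain ⟨v, hv0, hinj, hv⟩ := cycle_tuple G w hw (w.length - 1) (by omega)
    simp only [mem_image, mem_filter, mem_univ, true_and]
    refine ⟨⟨⟨w.length - 1, by omega⟩, v⟩, ⟨hinj, ?_⟩, hv0⟩
    intro j
    have := hv j
    simp only [G, SimpleGraph.edgeSet_fromEdgeSet] at this
    exact this.1

/-- (Erdős) For all natural numbers `k` and `g` there exists a finite simple graph whose
chromatic number is greater than `k` and whose girth is greater than `g` (both computed in
`ℕ∞`; `SimpleGraph.egirth` is the length of a shortest cycle, `⊤` for acyclic graphs). -/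
theorem exists_finite_graph_large_chromaticNumber_large_girth (k g : ℕ) :
    ∃ (V : Type) (_ : Fintype V) (G : SimpleGraph V),
      (k : ℕ∞) < G.chromaticNumber ∧ (g : ℕ∞) < G.egirth := by
  classical
  obtain ⟨n, s, G, D, hD, hn, hind, hcyc⟩ := main_exists (k+1) g (by omega)
  refine ⟨{x // x ∉ D}, inferInstance, G.comap Subtype.val, ?_, ?_⟩
  · rw [← not_le, SimpleGraph.chromaticNumber_le_iff_colorable]
    intro hc
    obtain ⟨c⟩ := hc.mono (Nat.le_succ k)
    have hcard : Fintype.card {x // x ∉ D} = n - D.card := by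
      rw [Fintype.card_subtype_compl]; simp
    have h1 : (k+1) * s < Fintype.card {x // x ∉ D} := by
      rw [hcard]
      have : 2 * (k+1) * s = (k+1) * s + (k+1) * s := by ring
      omega
    obtain ⟨y, hy⟩ := Fintype.exists_lt_card_fiber_of_mul_lt_card (f := c) (n := s) (by simpa using h1)
    obtain ⟨S, hS, hSs⟩ := exists_subset_card_eq hy.le
    obtain ⟨a, ha, b, hb, hab⟩ := hind (S.map (Function.Embedding.subtype _)) (by simpa using hSs)
    rw [mem_map] at ha hb
    obtain ⟨a, ha, rfl⟩ := ha
    obtain ⟨b, hb, rfl⟩ := hb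
    have e1 := (mem_filter.1 (hS ha)).2
    have e2 := (mem_filter.1 (hS hb)).2
    exact c.valid (v := a) (w := b) hab (e1.trans e2.symm)
  · rw [← ENat.add_one_le_iff (by simp), SimpleGraph.le_egirth]
    intro a w hw
    by_contra hcon
    have hl : w.length ≤ g := by
      by_contra h
      apply hcon
      exact_mod_cast (by omega : g + 1 ≤ w.length)
    let φ : G.comap (Subtype.val : {x // x ∉ D} → Fin n) →g G := ⟨Subtype.val, fun h => h⟩
    exact a.2 (hcyc _ (w.map φ) (hw.map (f := φ) Subtype.val_injective) (by simpa using hl))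
end

section
/- Let B be a Boolean algebra and A ⊆ B a Boolean subalgebra that is dense in B. Then the inclusion of A into B preserves all existing suprema: for every subset X ⊆ A and every a ∈ A, if a is the least upper bound of X computed in A, then a is the least upper bound of X computed in B. In particular, if the supremum of X in A equals ⊤ then the supremum of X in B equals ⊤; i.e., every dense subalgebra is a complete (supremum-preserving) subalgebra. -/
/-- Let `B` be a Boolean algebra and `A ⊆ B` a Boolean subalgebra (containing `⊥` and `⊤` and
closed under meet, join and complement) that is dense in `B` (below every nonzero element of
`B` there is a nonzero element of `A`).  Then the inclusion of `A` into `B` preserves all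
existing suprema: if `a ∈ A` is the least upper bound in `A` of a subset `X ⊆ A`, then `a` is
the least upper bound of `X` in `B`.  In particular every dense subalgebra is a complete
(supremum-preserving) subalgebra. -/
theorem dense_subalgebra_preserves_suprema (B : Type*) [BooleanAlgebra B] (A : Set B)
    (hbot : ⊥ ∈ A) (htop : ⊤ ∈ A)
    (hinf : ∀ a b : B, a ∈ A → b ∈ A → a ⊓ b ∈ A)
    (hsup : ∀ a b : B, a ∈ A → b ∈ A → a ⊔ b ∈ A)
    (hcompl : ∀ a : B, a ∈ A → aᶜ ∈ A)
    (hdense : ∀ b : B, b ≠ ⊥ → ∃ a ∈ A, a ≠ ⊥ ∧ a ≤ b)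
    (X : Set B) (hXA : X ⊆ A) (a : B) (haA : a ∈ A)
    (ha_ub : ∀ x ∈ X, x ≤ a)
    (ha_least : ∀ a' ∈ A, (∀ x ∈ X, x ≤ a') → a ≤ a') :
    IsLUB X a := by
  refine ⟨fun x hx => ha_ub x hx, fun b hb => ?_⟩
  by_contra hab
  obtain ⟨c, hcA, hc, hcab⟩ := hdense (a \ b) (fun h => hab (sdiff_eq_bot_iff.mp h))
  have hcb : Disjoint b c := disjoint_sdiff_self_right.mono_right hcab
  have h1 : a ≤ cᶜ := ha_least cᶜ (hcompl c hcA)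
    (fun x hx => (hb hx).trans (le_compl_iff_disjoint_right.mpr hcb))
  have h2 : Disjoint a c := le_compl_iff_disjoint_right.mp h1
  exact hc (disjoint_self.mp (h2.mono_left (hcab.trans sdiff_le)))
end
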